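/- Let Γ be a finitely generated group such that every homomorphism from Γ to a finite group is trivial. Let X be a compact metric space with a Borel probability measure μ of full support, and suppose Γ acts on X by measure-preserving homeomorphisms so that the action has discrete spectrum, i.e. L²(X, μ; ℂ) is the closed linear span of its finite-dimensional Γ-invariant closed subspaces under the Koopman representation. Then the action is trivial: for every γ ∈ Γ and every x ∈ X, γ · x = x. -/

import Mathlib

/-!
The Koopman operators act on each finite-dimensional invariant subspace `W` of `L²` through a
homomorphism from `Γ` to complex matrices. By Mal'cev's theorem the image of a finitely generated
group under such a homomorphism is residually finite, so, as `Γ` has no nontrivial finite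
quotients, `Γ` acts trivially on `W` (`matrix_rep_trivial`, `linear_rep_trivial`).
Mal'cev's theorem comes from commutative algebra: the matrices have entries in a finitely generated
subring of `ℂ`, and the nonzero elements of such a ring are detected by homomorphisms to finite
fields (`exists_finite_field_map_ne_zero`, a consequence of Zariski's lemma over `ℤ`).

By discrete spectrum and continuity every Koopman operator is then the identity on `L²`. Applied to
the continuous function `y ↦ dist y x`, this says that `dist (γ⁻¹ • y) x = dist y x` for almost
every `y`, hence for every `y` because `μ` has full support; the point `y = γ • x` gives
`γ • x = x`.
-/

open MeasureTheory

theorem isJacobsonRing_int : IsJacobsonRing ℤ := by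
  rw [isJacobsonRing_iff_prime_eq]
  intro P hP
  by_cases hP0 : P = ⊥
  · subst hP0
    rw [eq_bot_iff]
    intro x hx
    -- The only integer `x` with `x * x + 1` a unit is `0`.
    rcases Int.isUnit_iff.mp (Ideal.mem_jacobson_bot.mp hx x) with h | h
    · exact mul_self_eq_zero.mp (by linarith)
    · nlinarith [mul_self_nonneg x]
  · have := hP.isMaximal hP0
    exact Ideal.jacobson_eq_self_of_isMaximal

/-- A field which is a quotient of a finitely generated ring is finite: by Zariski's lemma it is
a finite `ℤ`-module, so it has positive characteristic, as otherwise `ℤ` would be a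
field. The `ℤ`-algebra structure on `B` is arbitrary so that it can be the one a localization
inherits from its base ring. -/
theorem finite_of_field_finiteType_int {B K : Type*} [CommRing B] [Algebra ℤ B]
    [Algebra.FiniteType ℤ B] [Field K] (f : B →+* K) (hf : Function.Surjective f) :
    Finite K := by
  have := isJacobsonRing_int
  let f' : B →ₐ[ℤ] K := { f with
    commutes' := fun n => (eq_intCast (f.comp (algebraMap ℤ B)) n).trans
      (eq_intCast (algebraMap ℤ K) n).symm }
  have hft : Algebra.FiniteType ℤ K := Algebra.FiniteType.of_surjective f' hf
  have hfin : Module.Finite ℤ K := finite_of_finite_type_of_isJacobsonRing ℤ K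
  have hint : Algebra.IsIntegral ℤ K := Algebra.IsIntegral.of_finite ℤ K
  obtain ⟨p, hp⟩ := CharP.exists K
  have hp0 : p ≠ 0 := by
    rintro rfl
    have : CharZero K := CharP.charP_to_charZero K
    have hinj : Function.Injective (algebraMap ℤ K) := by
      simpa using (Int.cast_injective : Function.Injective (Int.cast : ℤ → K))
    exact Int.not_isField ((hint.isField_iff_isField hinj).mpr (Field.toIsField K))
  refine Module.finite_of_fg_torsion K ?_
  intro x
  refine ⟨⟨(p : ℤ), mem_nonZeroDivisors_of_ne_zero (by exact_mod_cast hp0)⟩, ?_⟩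
  rw [Submonoid.mk_smul, zsmul_eq_mul]
  simp

/-- Nonzero elements of a finitely generated domain survive in some finite field: take a residue
field of the localization away from the element. -/
theorem exists_finite_field_map_ne_zero {A : Type} [CommRing A] [IsDomain A]
    [Algebra.FiniteType ℤ A] {a : A} (ha : a ≠ 0) :
    ∃ (K : Type) (_ : Field K) (_ : Finite K) (f : A →+* K), f a ≠ 0 := by
  have hnt : Nontrivial (Localization.Away a) :=
    (IsLocalization.injective (Localization.Away a)
      (powers_le_nonZeroDivisors_of_noZeroDivisors ha)).nontrivial
  have hft : Algebra.FiniteType A (Localization.Away a) :=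
    IsLocalization.finiteType_of_monoid_fg (Submonoid.powers a) _
  have hft' : Algebra.FiniteType ℤ (Localization.Away a) := Algebra.FiniteType.trans ‹_› hft
  obtain ⟨m, hm⟩ := Ideal.exists_maximal (Localization.Away a)
  let hK : Field (Localization.Away a ⧸ m) := Ideal.Quotient.field m
  have hfin : Finite (Localization.Away a ⧸ m) :=
    finite_of_field_finiteType_int (Ideal.Quotient.mk m) Ideal.Quotient.mk_surjective
  refine ⟨Localization.Away a ⧸ m, hK, hfin,
    (Ideal.Quotient.mk m).comp (algebraMap A (Localization.Away a)), ?_⟩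
  exact ((IsLocalization.Away.algebraMap_isUnit a).map (Ideal.Quotient.mk m)).ne_zero

/-- The form of Mal'cev's theorem used here. If `ρ γ ≠ 1`, reducing the matrices modulo a maximal
ideal of the ring of their entries which avoids a nonzero entry of `ρ γ - 1` gives a nontrivial
homomorphism to a finite group. -/
theorem matrix_rep_trivial {Γ : Type*} [Group Γ] (hfg : Group.FG Γ)
    (hq : ∀ (F : Type) [Group F] [Finite F] (φ : Γ →* F) (γ : Γ), φ γ = 1)
    {n : ℕ} (ρ : Γ →* Matrix (Fin n) (Fin n) ℂ) (γ : Γ) : ρ γ = 1 := by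
  -- Generating `Γ` as a monoid keeps entries of inverse matrices under control.
  obtain ⟨S, hS, hSfin⟩ := (Monoid.fg_iff (M := Γ)).mp (Group.fg_iff_monoid_fg.mp hfg)
  let T : Set ℂ := ⋃ s ∈ S, ⋃ i, ⋃ j, {ρ s i j}
  have hT : T.Finite :=
    hSfin.biUnion fun s _ => Set.finite_iUnion fun i => Set.finite_iUnion fun j =>
      Set.finite_singleton _
  let A : Subalgebra ℤ ℂ := Algebra.adjoin ℤ T
  have hA : Algebra.FiniteType ℤ A :=
    A.fg_iff_finiteType.mp (Subalgebra.fg_def.mpr ⟨T, hT, rfl⟩)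
  let ι : Matrix (Fin n) (Fin n) A →+* Matrix (Fin n) (Fin n) ℂ :=
    (A.val : A →+* ℂ).mapMatrix
  have hι : Function.Injective ι := Matrix.map_injective Subtype.val_injective
  have hmem : ∀ g : Γ, ∃ M, ι M = ρ g := by
    have htop : (MonoidHom.mrange ι.toMonoidHom).comap ρ = ⊤ := by
      rw [eq_top_iff, ← hS, Submonoid.closure_le]
      intro s hs
      refine ⟨fun i j => ⟨ρ s i j, Algebra.subset_adjoin ?_⟩, rfl⟩
      simp only [T, Set.mem_iUnion]
      exact ⟨s, hs, i, j, rfl⟩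
    intro g
    have hg : g ∈ (MonoidHom.mrange ι.toMonoidHom).comap ρ :=
      htop ▸ Submonoid.mem_top g
    exact hg
  choose σ hσ using hmem
  let σ' : Γ →* Matrix (Fin n) (Fin n) A :=
    { toFun := σ
      map_one' := hι (by rw [hσ, map_one, map_one])
      map_mul' := fun g h => hι (by rw [hσ, map_mul, map_mul, hσ, hσ]) }
  suffices h : σ γ = 1 by rw [← hσ, h, map_one]
  by_contra hne
  obtain ⟨i, j, hij⟩ : ∃ i j, (σ γ - 1) i j ≠ 0 := by
    by_contra! h
    exact hne (sub_eq_zero.mp (by ext i j; rw [h]; rfl))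
  obtain ⟨K, _, _, f, hf⟩ := exists_finite_field_map_ne_zero hij
  let τ : Γ →* (Matrix (Fin n) (Fin n) K)ˣ :=
    ((f.mapMatrix (m := Fin n)).toMonoidHom.comp σ').toHomUnits
  have hτ : f.mapMatrix (σ γ) = 1 := congrArg Units.val (hq _ τ γ)
  apply hf
  have h0 : f.mapMatrix (σ γ - 1) = 0 := by rw [map_sub, hτ, map_one, sub_self]
  exact congrFun (congrFun h0 i) j

theorem linear_rep_trivial {Γ : Type*} [Group Γ] (hfg : Group.FG Γ)
    (hq : ∀ (F : Type) [Group F] [Finite F] (φ : Γ →* F) (γ : Γ), φ γ = 1)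
    {W : Type*} [AddCommGroup W] [Module ℂ W] [FiniteDimensional ℂ W]
    (ρ : Γ →* (W →ₗ[ℂ] W)) (γ : Γ) : ρ γ = 1 := by
  let e := LinearMap.toMatrixAlgEquiv (Module.finBasis ℂ W)
  have h := matrix_rep_trivial hfg hq (e.toMulEquiv.toMonoidHom.comp ρ) γ
  exact e.injective (h.trans (map_one e).symm)

/-- If a finitely generated group with no nontrivial finite quotients acts by
measure-preserving homeomorphisms on a compact metric space equipped with a Borel probability
measure of full support, and the action has discrete spectrum, then the action is trivial. -/
theorem action_trivial_of_no_finite_quotients_discrete_spectrum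
    (Γ : Type*) [Group Γ] (hfg : Group.FG Γ)
    (hq : ∀ (F : Type) [Group F] [Finite F] (φ : Γ →* F) (γ : Γ), φ γ = 1)
    (X : Type*) [MetricSpace X] [CompactSpace X] [MeasurableSpace X] [BorelSpace X]
    (μ : Measure X) [IsProbabilityMeasure μ] [μ.IsOpenPosMeasure]
    [MulAction Γ X]
    (hcont : ∀ γ : Γ, Continuous (fun x : X => γ • x))
    (hmp : ∀ γ : Γ, MeasurePreserving (fun x : X => γ • x) μ μ)
    (hds : (sSup {W : Submodule ℂ (Lp ℂ 2 μ) |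
        IsClosed (W : Set (Lp ℂ 2 μ)) ∧ FiniteDimensional ℂ W ∧
        ∀ γ : Γ, ∀ f ∈ W,
          Lp.compMeasurePreserving (fun x : X => γ⁻¹ • x) (hmp γ⁻¹) f ∈ W}).topologicalClosure
      = ⊤)
    (γ : Γ) (x : X) :
    γ • x = x := by
  let U : Γ → (Lp ℂ 2 μ →ₗ[ℂ] Lp ℂ 2 μ) := fun g =>
    Lp.compMeasurePreservingₗ ℂ (fun x : X => g⁻¹ • x) (hmp g⁻¹)
  have hU1 : ∀ f, U 1 f = f := by
    intro f
    have h : (fun x : X => (1 : Γ)⁻¹ • x) = id := by ext; simp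
    change Lp.compMeasurePreserving (fun x : X => (1 : Γ)⁻¹ • x) (hmp 1⁻¹) f = f
    simp only [h]
    exact Lp.compMeasurePreserving_id_apply f
  have hUmul : ∀ g h f, U (g * h) f = U g (U h f) := by
    intro g h f
    have hgh : (fun x : X => (g * h)⁻¹ • x) = (fun x => h⁻¹ • x) ∘ (fun x => g⁻¹ • x) := by
      ext; simp [mul_smul]
    change Lp.compMeasurePreserving (fun x : X => (g * h)⁻¹ • x) (hmp (g * h)⁻¹) f = _
    simp only [hgh]
    exact Lp.compMeasurePreserving_comp_apply f (hmp h⁻¹) (hmp g⁻¹)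
  have hUcont : Continuous (U γ) := (Lp.isometry_compMeasurePreserving (hmp γ⁻¹)).continuous
  have hUid : ∀ f, U γ f = f := by
    let E : Submodule ℂ (Lp ℂ 2 μ) := LinearMap.eqLocus (U γ) LinearMap.id
    have hE : IsClosed (E : Set (Lp ℂ 2 μ)) := isClosed_eq hUcont continuous_id
    have hle : (⊤ : Submodule ℂ (Lp ℂ 2 μ)) ≤ E := by
      rw [← hds]
      refine Submodule.topologicalClosure_minimal _ (sSup_le ?_) hE
      rintro W ⟨-, hWfin, hW⟩ f hf
      let ρ : Γ →* (W →ₗ[ℂ] W) :=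
        { toFun := fun g => (U g).restrict (hW g)
          map_one' := by ext1 w; exact Subtype.ext (hU1 w)
          map_mul' := fun g h => by ext1 w; exact Subtype.ext (hUmul g h w) }
      have h := LinearMap.congr_fun (linear_rep_trivial hfg hq ρ γ) ⟨f, hf⟩
      exact congrArg Subtype.val h
    exact fun f => hle Submodule.mem_top
  let d : C(X, ℂ) := ⟨fun y => (dist y x : ℂ), by fun_prop⟩
  have hd : MemLp d 2 μ :=
    d.continuous.memLp_of_hasCompactSupport (HasCompactSupport.of_compactSpace _)
  have h1 : (d ∘ fun y => γ⁻¹ • y) =ᵐ[μ] d := by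
    have h := hUid (hd.toLp d)
    exact (MemLp.toLp_eq_toLp_iff (hd.comp_measurePreserving (hmp γ⁻¹)) hd).mp h
  have h2 := (Continuous.ae_eq_iff_eq μ (d.continuous.comp (hcont γ⁻¹)) d.continuous).mp h1
  have h3 := congrFun h2 (γ • x)
  have h4 : (dist (γ⁻¹ • γ • x) x : ℂ) = dist (γ • x) x := h3
  rw [inv_smul_smul, dist_self] at h4
  exact dist_eq_zero.mp (by exact_mod_cast h4.symm)
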